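/- Let R be a Cohen-Macaulay commutative noetherian local ring. Suppose there are only finitely many isomorphism classes of indecomposable finitely generated R-modules that are maximal Cohen-Macaulay and locally free on the punctured spectrum (i.e., only finitely many isomorphism classes of indecomposable modules in CM_0(R)). Then R is an isolated singularity, that is, R_p is a regular local ring for every nonmaximal prime ideal p of R. -/

import Mathlib

open CategoryTheory IsLocalRing

noncomputable section

/-- The `i`-th Tor module of two `R`-modules, as an object of `ModuleCat R`. -/
def TorMod (R : Type) [CommRing R] (i : ℕ) (M N : ModuleCat.{0} R) : ModuleCat.{0} R :=
  ((Tor (ModuleCat.{0} R) i).obj M).obj N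

/-- The `i`-th Ext module of two `R`-modules, as an object of `ModuleCat R`. -/
def ExtMod (R : Type) [CommRing R] (i : ℕ) (M N : ModuleCat.{0} R) : ModuleCat.{0} R :=
  ((Ext R (ModuleCat.{0} R) i).obj (Opposite.op M)).obj N

/-- Integer-indexed Tor: `Tor_n = 0` for `n < 0`. -/
def TorZ (R : Type) [CommRing R] (n : ℤ) (M N : ModuleCat.{0} R) : ModuleCat.{0} R :=
  if 0 ≤ n then TorMod R n.toNat M N else ModuleCat.of R PUnit

/-- Integer-indexed Ext: `Ext^n = 0` for `n < 0`. -/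
def ExtZ (R : Type) [CommRing R] (n : ℤ) (M N : ModuleCat.{0} R) : ModuleCat.{0} R :=
  if 0 ≤ n then ExtMod R n.toNat M N else ModuleCat.of R PUnit

/-- The depth of a module `N` over a local ring `S`, defined as the infimum of the set of
integers `i` such that `Ext^i(k, N) ≠ 0`, where `k` is the residue field of `S`
(`⊤` if no such `i` exists). -/
def moduleDepth (S : Type) [CommRing S] [IsLocalRing S] (N : Type) [AddCommGroup N]
    [Module S N] : ℕ∞ :=
  sInf {i : ℕ∞ | ∃ j : ℕ, i = (j : ℕ∞) ∧
    Nontrivial (ExtMod S j (ModuleCat.of S (ResidueField S)) (ModuleCat.of S N))}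

/-- A local ring is regular if it is noetherian and its maximal ideal can be generated by
(Krull dimension of `S`)-many elements. -/
def IsRegularLocal (S : Type) [CommRing S] [IsLocalRing S] : Prop :=
  IsNoetherianRing S ∧ ∃ s : Finset S, Ideal.span (s : Set S) = maximalIdeal S ∧
    (s.card : WithBot ℕ∞) = ringKrullDim S

/-- A local ring is Cohen-Macaulay if its depth (as a module over itself) equals its
Krull dimension. -/
def IsCMLocalRing (R : Type) [CommRing R] [IsLocalRing R] : Prop :=
  (moduleDepth R R : WithBot ℕ∞) = ringKrullDim R

/-- A module `M` over a local ring `R` is maximal Cohen-Macaulay if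
`depth M_p ≥ dim R_p` for every prime ideal `p` of `R`. -/
def IsMCMModule (R : Type) [CommRing R] [IsLocalRing R] (M : Type) [AddCommGroup M]
    [Module R M] : Prop :=
  ∀ (p : Ideal R) [p.IsPrime],
    ringKrullDim (Localization.AtPrime p) ≤
      (moduleDepth (Localization.AtPrime p) (LocalizedModule p.primeCompl M) : WithBot ℕ∞)

/-- Membership in `CM(R)`: finitely generated maximal Cohen-Macaulay modules. -/
def MemCM (R : Type) [CommRing R] [IsLocalRing R] (M : ModuleCat.{0} R) : Prop :=
  Module.Finite R M ∧ IsMCMModule R M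

/-- Membership in `CM₀(R)`: finitely generated maximal Cohen-Macaulay modules that are
locally free on the punctured spectrum. -/
def MemCM0 (R : Type) [CommRing R] [IsLocalRing R] (M : ModuleCat.{0} R) : Prop :=
  Module.Finite R M ∧ IsMCMModule R M ∧
    ∀ (p : Ideal R) [p.IsPrime], p ≠ maximalIdeal R →
      Module.Free (Localization.AtPrime p) (LocalizedModule p.primeCompl M)

/-- The singular locus of `R`: primes `p` such that `R_p` is not regular. -/
def singularLocus (R : Type) [CommRing R] : Set (PrimeSpectrum R) :=
  {p | ¬ IsRegularLocal (Localization.AtPrime p.asIdeal)}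

/-- The nonfree locus of a module `M`: primes `p` such that `M_p` is not a free
`R_p`-module. -/
def nonfreeLocus (R : Type) [CommRing R] (M : Type) [AddCommGroup M] [Module R M] :
    Set (PrimeSpectrum R) :=
  {p | ¬ Module.Free (Localization.AtPrime p.asIdeal)
        (LocalizedModule p.asIdeal.primeCompl M)}

/-- `K` is a first syzygy of `N` in a minimal free resolution: there is a surjection
`f : R^n → N` with `ker f ⊆ m·R^n` and `K ≅ ker f`. -/
def IsMinimalSyzygy1 (R : Type) [CommRing R] [IsLocalRing R] (N K : ModuleCat.{0} R) : Prop :=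
  ∃ (n : ℕ) (f : (Fin n → R) →ₗ[R] N), Function.Surjective f ∧
    LinearMap.ker f ≤ (maximalIdeal R) • (⊤ : Submodule R (Fin n → R)) ∧
    Nonempty (K ≃ₗ[R] LinearMap.ker f)

/-- `K` is a `d`-th syzygy of `N` in a minimal free resolution. -/
def IsMinimalSyzygy (R : Type) [CommRing R] [IsLocalRing R] :
    ℕ → ModuleCat.{0} R → ModuleCat.{0} R → Prop
  | 0, N, K => Nonempty ((K : Type) ≃ₗ[R] N)
  | d + 1, N, K => ∃ L : ModuleCat.{0} R, IsMinimalSyzygy1 R N L ∧ IsMinimalSyzygy R d L K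

/-- A module is indecomposable if it is nonzero and is not isomorphic to the direct sum of
two nonzero modules. -/
def IndecomposableModule (R : Type) [CommRing R] (M : Type) [AddCommGroup M] [Module R M] :
    Prop :=
  Nontrivial M ∧ ∀ (A B : Type) [AddCommGroup A] [Module R A] [AddCommGroup B] [Module R B],
    Nonempty (M ≃ₗ[R] A × B) → (Subsingleton A ∨ Subsingleton B)

/-!
Fix a nonmaximal prime `p` and let `d = dim R`. Every module in `CM₀(R)` is free at `p`, so some
`a ∉ p` acts on it by a map factoring through a free module; finite type makes one `a` work for
all of `CM₀(R)`. The modules `Ω^d(R/(p + m^i))` lie in `CM₀(R)`, so `a` kills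
`Tor₁(Ω^d(R/(p + m^i)), R/p) ≅ Tor_{d+1}(R/(p + m^i), R/p) ≅ Tor₁(R/(p + m^i), Ω^d(R/p))` for
every `i`, and hence, by Krull's intersection theorem, `Tor₁(R/p, Ω^d(R/p))`. As `a` is a unit in
`R_p`, this forces `Ω^d(R/p)_p` to be free, so the residue field of `R_p` has finite projective
dimension and `R_p` is regular by Serre's theorem.
-/

section ExtVanishing

variable {C : Type*} [Category* C] [Abelian C]

section LinearYoneda

variable {R : Type*} [CommRing R] [Linear R C] {X : C} (P : ProjectiveResolution X)
  (Y : C)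

theorem exactAt_zero_linearYonedaObj_iff :
    (P.complex.linearYonedaObj R Y).ExactAt 0 ↔ Subsingleton (X ⟶ Y) := by
  rw [HomologicalComplex.exactAt_iff' _ 0 0 1 (by simp) (by simp),
    ShortComplex.moduleCat_exact_iff]
  change _ ↔ Subsingleton (((ChainComplex.single₀ C).obj X).X 0 ⟶ Y)
  constructor
  · intro h
    refine subsingleton_of_forall_eq 0 fun f ↦ ?_
    obtain ⟨g, hg⟩ := h (P.π.f 0 ≫ f) <| by
      change P.complex.d 1 0 ≫ P.π.f 0 ≫ f = 0
      rw [P.complex_d_comp_π_f_zero_assoc, Limits.zero_comp]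
    have hf : P.π.f 0 ≫ f = 0 := by
      have hd : (P.complex.linearYonedaObj R Y).d 0 0 = 0 :=
        HomologicalComplex.shape _ _ _ (by simp)
      rw [← hg, HomologicalComplex.shortComplexFunctor'_obj_f, hd]
      rfl
    rwa [← cancel_epi (P.π.f 0), Limits.comp_zero]
  · intro h f hf
    change P.complex.X 0 ⟶ Y at f
    change P.complex.d 1 0 ≫ f = 0 at hf
    have hf₀ : f = 0 := by
      rw [← P.exact₀.g_desc f hf, h.elim (P.exact₀.desc f hf) 0, Limits.comp_zero]
    exact ⟨0, by rw [hf₀, map_zero]; rfl⟩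

variable [HasExt C]

theorem exactAt_succ_linearYonedaObj_iff (n : ℕ) :
    (P.complex.linearYonedaObj R Y).ExactAt (n + 1) ↔
      Subsingleton (Abelian.Ext X Y (n + 1)) := by
  rw [HomologicalComplex.exactAt_iff' _ n (n + 1) (n + 2) (by simp) (by simp),
    ShortComplex.moduleCat_exact_iff]
  constructor
  · intro h
    refine subsingleton_of_forall_eq 0 fun a ↦ ?_
    obtain ⟨f, hf, rfl⟩ := P.extMk_surjective a (n + 2) rfl
    exact (P.extMk_eq_zero_iff f _ _ hf n rfl).2 (h f hf)
  · intro h f hf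
    exact (P.extMk_eq_zero_iff f (n + 2) rfl hf n rfl).1 (Subsingleton.elim _ _)

theorem exactAt_linearYonedaObj_iff (n : ℕ) :
    (P.complex.linearYonedaObj R Y).ExactAt n ↔ Subsingleton (Abelian.Ext X Y n) := by
  cases n with
  | zero =>
    rw [exactAt_zero_linearYonedaObj_iff, Abelian.Ext.homEquiv₀.subsingleton_congr]
  | succ n => exact exactAt_succ_linearYonedaObj_iff P Y n

end LinearYoneda

theorem subsingleton_extMod_iff {S : Type} [CommRing S] {i : ℕ} {N M : ModuleCat.{0} S} :
    Subsingleton (ExtMod S i N M) ↔ Subsingleton (Abelian.Ext N M i) := by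
  let P := projectiveResolution N
  rw [← exactAt_linearYonedaObj_iff (R := S) P, HomologicalComplex.exactAt_iff_isZero_homology,
    ← (P.isoExt i M).isZero_iff, ModuleCat.isZero_iff_subsingleton, ExtMod]

variable [HasExt C] {n : ℕ}

theorem subsingleton_ext_of_retract_right {X Y Z : C} (r : Retract Y Z)
    [Subsingleton (Abelian.Ext X Z n)] : Subsingleton (Abelian.Ext X Y n) := by
  refine subsingleton_of_forall_eq 0 fun a ↦ ?_
  calc a = (a.comp (.mk₀ r.i) (add_zero n)).comp (.mk₀ r.r) (add_zero n) := by simp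
    _ = 0 := by
      rw [Subsingleton.elim (a.comp (.mk₀ r.i) (add_zero n)) 0, Abelian.Ext.zero_comp]

theorem subsingleton_ext_of_retract_left {X Y Z : C} (r : Retract X Z)
    [Subsingleton (Abelian.Ext Z Y n)] : Subsingleton (Abelian.Ext X Y n) := by
  refine subsingleton_of_forall_eq 0 fun a ↦ ?_
  calc a = (Abelian.Ext.mk₀ r.i).comp ((Abelian.Ext.mk₀ r.r).comp a (zero_add n)) (zero_add n) := by
        simp
    _ = 0 := by
      rw [Subsingleton.elim ((Abelian.Ext.mk₀ r.r).comp a (zero_add n)) 0, Abelian.Ext.comp_zero]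

theorem subsingleton_ext_of_isZero_left {X : C} (hX : Limits.IsZero X) (Y : C) :
    Subsingleton (Abelian.Ext X Y n) :=
  subsingleton_of_forall_eq 0 fun a ↦ by
    rw [← a.mk₀_id_comp, hX.eq_of_src (𝟙 X) 0, Abelian.Ext.mk₀_zero, Abelian.Ext.zero_comp]

theorem subsingleton_ext_of_isZero_right (X : C) {Y : C} (hY : Limits.IsZero Y) :
    Subsingleton (Abelian.Ext X Y n) :=
  subsingleton_of_forall_eq 0 fun a ↦ by
    rw [← a.comp_mk₀_id, hY.eq_of_src (𝟙 Y) 0, Abelian.Ext.mk₀_zero, Abelian.Ext.comp_zero]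

variable {T : ShortComplex C}

theorem subsingleton_ext_zero_X₁ (hT : T.ShortExact) (X : C)
    [Subsingleton (Abelian.Ext X T.X₂ 0)] :
    Subsingleton (Abelian.Ext X T.X₁ 0) :=
  have := hT.mono_f
  (Abelian.Ext.postcomp_mk₀_injective_of_mono X T.f).subsingleton

theorem subsingleton_ext_succ_X₁ (hT : T.ShortExact) (X : C)
    [Subsingleton (Abelian.Ext X T.X₂ (n + 1))] [Subsingleton (Abelian.Ext X T.X₃ n)] :
    Subsingleton (Abelian.Ext X T.X₁ (n + 1)) := by
  refine subsingleton_of_forall_eq 0 fun a ↦ ?_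
  obtain ⟨x, rfl⟩ := Abelian.Ext.covariant_sequence_exact₁ _ hT a (Subsingleton.elim _ _) rfl
  rw [Subsingleton.elim x 0, Abelian.Ext.zero_comp]

theorem subsingleton_ext_X₂_right (hT : T.ShortExact) (X : C)
    [Subsingleton (Abelian.Ext X T.X₁ n)] [Subsingleton (Abelian.Ext X T.X₃ n)] :
    Subsingleton (Abelian.Ext X T.X₂ n) := by
  refine subsingleton_of_forall_eq 0 fun a ↦ ?_
  obtain ⟨x, rfl⟩ := Abelian.Ext.covariant_sequence_exact₂ _ hT a (Subsingleton.elim _ _)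
  rw [Subsingleton.elim x 0, Abelian.Ext.zero_comp]

theorem subsingleton_ext_X₂_left (hT : T.ShortExact) (X : C)
    [Subsingleton (Abelian.Ext T.X₁ X n)] [Subsingleton (Abelian.Ext T.X₃ X n)] :
    Subsingleton (Abelian.Ext T.X₂ X n) := by
  refine subsingleton_of_forall_eq 0 fun a ↦ ?_
  obtain ⟨x, rfl⟩ := Abelian.Ext.contravariant_sequence_exact₂ hT _ a (Subsingleton.elim _ _)
  rw [Subsingleton.elim x 0, Abelian.Ext.comp_zero]

end ExtVanishing

universe u v

theorem shortExact_shortComplexOfCompEqZero {R : Type*} [Ring R] {M₁ M₂ M₃ : Type v}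
    [AddCommGroup M₁] [AddCommGroup M₂] [AddCommGroup M₃] [Module R M₁] [Module R M₂] [Module R M₃]
    {f : M₁ →ₗ[R] M₂} {g : M₂ →ₗ[R] M₃} (hf : Function.Injective f) (hg : Function.Surjective g)
    (hfg : Function.Exact f g) :
    (ModuleCat.shortComplexOfCompEqZero f g hfg.linearMap_comp_eq_zero).ShortExact :=
  ModuleCat.shortComplex_shortExact _ hfg hf hg

theorem hasProjectiveDimensionLE_succ_iff_of_exact {R : Type u} [Ring R] {A P C : Type u}
    [AddCommGroup A] [AddCommGroup P] [AddCommGroup C] [Module R A] [Module R P] [Module R C]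
    [Module.Projective R P] {f : A →ₗ[R] P} {g : P →ₗ[R] C} (hf : Function.Injective f)
    (hg : Function.Surjective g) (hfg : Function.Exact f g) {n : ℕ} :
    HasProjectiveDimensionLE (ModuleCat.of R C) (n + 1) ↔
      HasProjectiveDimensionLE (ModuleCat.of R A) n :=
  (shortExact_shortComplexOfCompEqZero hf hg hfg).hasProjectiveDimensionLT_X₃_iff _
    ((IsProjective.iff_projective P).1 inferInstance)

section Depth

variable {S : Type} [CommRing S] [IsLocalRing S] {A B C : Type} [AddCommGroup A] [AddCommGroup B]
  [AddCommGroup C] [Module S A] [Module S B] [Module S C]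

theorem le_moduleDepth_iff {n : ℕ∞} : n ≤ moduleDepth S A ↔ ∀ i : ℕ, (i : ℕ∞) < n →
    Subsingleton (Abelian.Ext (ModuleCat.of S (ResidueField S)) (ModuleCat.of S A) i) := by
  simp_rw [← subsingleton_extMod_iff, ← not_nontrivial_iff_subsingleton]
  rw [moduleDepth, le_sInf_iff]
  constructor
  · intro h i hi hExt
    exact hi.not_ge (h i ⟨i, rfl, hExt⟩)
  · rintro h _ ⟨i, rfl, hExt⟩
    exact not_lt.1 fun hi ↦ h i hi hExt

theorem subsingleton_ext_of_lt_moduleDepth {i : ℕ} (hi : (i : ℕ∞) < moduleDepth S A) :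
    Subsingleton (Abelian.Ext (ModuleCat.of S (ResidueField S)) (ModuleCat.of S A) i) :=
  le_moduleDepth_iff.1 le_rfl i hi

theorem moduleDepth_le_of_retract (i : A →ₗ[S] B) (r : B →ₗ[S] A) (hri : r ∘ₗ i = LinearMap.id) :
    moduleDepth S B ≤ moduleDepth S A := by
  refine le_moduleDepth_iff.2 fun j hj ↦ ?_
  have := subsingleton_ext_of_lt_moduleDepth hj
  exact subsingleton_ext_of_retract_right (Z := ModuleCat.of S B)
    ⟨ModuleCat.ofHom i, ModuleCat.ofHom r, by rw [← ModuleCat.ofHom_comp, hri, ModuleCat.ofHom_id]⟩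

theorem moduleDepth_congr (e : A ≃ₗ[S] B) : moduleDepth S A = moduleDepth S B :=
  le_antisymm (moduleDepth_le_of_retract e.symm.toLinearMap e.toLinearMap (by simp))
    (moduleDepth_le_of_retract e.toLinearMap e.symm.toLinearMap (by simp))

theorem min_moduleDepth_le_left {f : A →ₗ[S] B} {g : B →ₗ[S] C} (hf : Function.Injective f)
    (hg : Function.Surjective g) (hfg : Function.Exact f g) :
    min (moduleDepth S B) (moduleDepth S C + 1) ≤ moduleDepth S A := by
  have hT := shortExact_shortComplexOfCompEqZero hf hg hfg
  refine le_moduleDepth_iff.2 fun i hi ↦ ?_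
  have hB := subsingleton_ext_of_lt_moduleDepth (lt_min_iff.1 hi).1
  cases i with
  | zero => exact subsingleton_ext_zero_X₁ hT _
  | succ j =>
    have hC := subsingleton_ext_of_lt_moduleDepth (S := S) (A := C) (i := j)
      (lt_of_add_lt_add_right (a := 1) (by exact_mod_cast (lt_min_iff.1 hi).2))
    exact subsingleton_ext_succ_X₁ hT _

theorem min_moduleDepth_le_middle {f : A →ₗ[S] B} {g : B →ₗ[S] C} (hf : Function.Injective f)
    (hg : Function.Surjective g) (hfg : Function.Exact f g) :
    min (moduleDepth S A) (moduleDepth S C) ≤ moduleDepth S B := by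
  have hT := shortExact_shortComplexOfCompEqZero hf hg hfg
  refine le_moduleDepth_iff.2 fun i hi ↦ ?_
  have hA := subsingleton_ext_of_lt_moduleDepth (lt_min_iff.1 hi).1
  have hC := subsingleton_ext_of_lt_moduleDepth (lt_min_iff.1 hi).2
  exact subsingleton_ext_X₂_right hT _

theorem moduleDepth_of_subsingleton [Subsingleton A] : moduleDepth S A = ⊤ :=
  top_le_iff.1 <| le_moduleDepth_iff.2 fun _ _ ↦
    subsingleton_ext_of_isZero_right _ (ModuleCat.isZero_of_subsingleton _)

theorem moduleDepth_le_pi (n : ℕ) : moduleDepth S A ≤ moduleDepth S (Fin n → A) := by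
  induction n with
  | zero => exact moduleDepth_of_subsingleton (S := S) (A := Fin 0 → A) ▸ le_top
  | succ n ih =>
    rw [← moduleDepth_congr (Fin.consLinearEquiv S fun _ : Fin (n + 1) ↦ A)]
    exact (le_min le_rfl ih).trans <| min_moduleDepth_le_middle LinearMap.inl_injective
      LinearMap.snd_surjective Function.Exact.inl_snd

theorem moduleDepth_self_le_of_free [Module.Finite S A] [Module.Free S A] :
    moduleDepth S S ≤ moduleDepth S A :=
  moduleDepth_congr (Module.finBasis S A).equivFun ▸ moduleDepth_le_pi _

end Depth

section Ischebeck

theorem subsingleton_ext_of_subsingleton_ext_quotSMulTop {R : Type u} [CommRing R]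
    [Small.{v} R] [IsNoetherianRing R] [IsLocalRing R] {N M : Type v} [AddCommGroup N]
    [AddCommGroup M] [Module R N] [Module R M] [Module.Finite R N] [Module.Finite R M] {x : R}
    (hx : x ∈ maximalIdeal R) (hreg : IsSMulRegular N x) {i : ℕ}
    [Subsingleton (Abelian.Ext (ModuleCat.of R (QuotSMulTop x N)) (ModuleCat.of R M) (i + 1))] :
    Subsingleton (Abelian.Ext (ModuleCat.of R N) (ModuleCat.of R M) i) := by
  let E := Abelian.Ext (ModuleCat.of R N) (ModuleCat.of R M) i
  have hT : ((ModuleCat.of R N).smulShortComplex x).ShortExact := hreg.smulShortComplex_shortExact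
  by_contra hE
  rw [not_subsingleton_iff_nontrivial] at hE
  refine Submodule.top_ne_pointwise_smul_of_mem_jacobson_annihilator (R := R) (M := E)
    (maximalIdeal_le_jacobson _ hx) (eq_top_iff.2 fun y _ ↦ ?_).symm
  obtain ⟨z : E, hz : (Abelian.Ext.mk₀ (x • 𝟙 (ModuleCat.of R N))).comp z (zero_add i) = y⟩ :=
    Abelian.Ext.contravariant_sequence_exact₁ hT (ModuleCat.of R M) y (add_comm 1 i)
      (Subsingleton.elim (α := Abelian.Ext (ModuleCat.of R (QuotSMulTop x N)) _ (i + 1)) _ _)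
  rw [Abelian.Ext.mk₀_smul, Abelian.Ext.smul_comp, Abelian.Ext.mk₀_id_comp] at hz
  exact hz ▸ Submodule.smul_mem_pointwise_smul z x ⊤ trivial

theorem isSMulRegular_quotient_of_notMem {R : Type*} [CommRing R] {q : Ideal R} [q.IsPrime] {x : R}
    (hx : x ∉ q) : IsSMulRegular (R ⧸ q) x := by
  rw [isSMulRegular_iff_right_eq_zero_of_smul]
  intro y hy
  rw [Algebra.smul_def, mul_eq_zero] at hy
  exact hy.resolve_left fun h ↦ hx (Ideal.Quotient.eq_zero_iff_mem.1 h)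

variable {R : Type} [CommRing R] [IsNoetherianRing R] [IsLocalRing R]

theorem subsingleton_ext_of_add_le_moduleDepth {M : Type} [AddCommGroup M] [Module R M]
    [Module.Finite R M] {r : ℕ} {N : Type} [AddCommGroup N] [Module R N] [Module.Finite R N]
    (hN : Module.supportDim R N < r) {i : ℕ} (hi : ((i + r : ℕ) : ℕ∞) ≤ moduleDepth R M) :
    Subsingleton (Abelian.Ext (ModuleCat.of R N) (ModuleCat.of R M) i) := by
  induction r generalizing N i with
  | zero =>
    have : Subsingleton N :=
      (Module.supportDim_eq_bot_iff_subsingleton R N).1 ((WithBot.lt_zero_iff_eq_bot _).1 hN)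
    exact subsingleton_ext_of_isZero_left (ModuleCat.isZero_of_subsingleton _) _
  | succ r ih =>
    induction ‹Module.Finite R N› using
      IsNoetherianRing.induction_on_isQuotientEquivQuotientPrime R with
    | subsingleton N => exact subsingleton_ext_of_isZero_left (ModuleCat.isZero_of_subsingleton _) _
    | exact N₁ N₂ N₃ f g hf hg hfg h₁ h₃ =>
      have := h₁ ((Module.supportDim_le_of_injective f hf).trans_lt hN)
      have := h₃ ((Module.supportDim_le_of_surjective g hg).trans_lt hN)
      exact subsingleton_ext_X₂_left (shortExact_shortComplexOfCompEqZero hf hg hfg) _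
    | quotient N q e =>
      by_cases hq : q.1 = maximalIdeal R
      · have := subsingleton_ext_of_lt_moduleDepth (S := R) (A := M) (i := i)
          ((Nat.cast_lt.2 (by lia)).trans_le hi)
        exact subsingleton_ext_of_retract_left (Z := ModuleCat.of R (ResidueField R))
          (Retract.ofIso (e.trans (Submodule.quotEquivOfEq _ _ hq)).toModuleIso)
      · obtain ⟨x, hxm, hxq⟩ :=
          SetLike.exists_of_lt (lt_of_le_of_ne (le_maximalIdeal q.2.ne_top) hq)
        have hreg : IsSMulRegular N x :=
          (e.isSMulRegular_congr x).2 (isSMulRegular_quotient_of_notMem hxq)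
        have hdim : Module.supportDim R (QuotSMulTop x N) < r := by
          rw [← Module.supportDim_quotSMulTop_succ_eq_supportDim hreg hxm] at hN
          exact lt_of_add_lt_add_right (a := 1) (by exact_mod_cast hN)
        have := ih hdim (i := i + 1) (by rwa [add_right_comm])
        exact subsingleton_ext_of_subsingleton_ext_quotSMulTop hxm hreg

end Ischebeck

theorem height_add_ringKrullDim_quotient_le {R : Type*} [CommRing R] (p : Ideal R)
    [hp : p.IsPrime] : (p.height : WithBot ℕ∞) + ringKrullDim (R ⧸ p) ≤ ringKrullDim R := by
  have : Nontrivial R := nontrivial_of_ne 0 1 fun h ↦ hp.one_notMem (h ▸ p.zero_mem)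
  let P : PrimeSpectrum R := ⟨p, hp⟩
  have hcoheight : ringKrullDim (R ⧸ p) = Order.coheight P := by
    rw [ringKrullDim_quotient, Order.coheight_eq_krullDim_Ici]
    rfl
  have hheight : p.height = Order.height P := PrimeSpectrum.height_eq_orderHeight P
  rw [hcoheight, hheight, ringKrullDim, Order.krullDim_eq_iSup_height_add_coheight_of_nonempty]
  exact_mod_cast le_iSup (fun a : PrimeSpectrum R ↦ Order.height a + Order.coheight a) P

theorem exists_ringKrullDim_eq_natCast (R : Type*) [CommRing R] [FiniteRingKrullDim R] :
    ∃ n : ℕ, ringKrullDim R = n := by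
  obtain ⟨d, hd⟩ := WithBot.ne_bot_iff_exists.1 (ringKrullDim_ne_bot (R := R))
  obtain ⟨n, rfl⟩ := ENat.ne_top_iff_exists.1 fun h : d = ⊤ ↦
    ringKrullDim_ne_top (R := R) (hd.symm.trans (congrArg _ h))
  exact ⟨n, hd.symm⟩

theorem smul_top_lt_top_of_le_maximalIdeal {R M : Type*} [CommRing R] [IsLocalRing R]
    [AddCommGroup M] [Module R M] [Module.Finite R M] [Nontrivial M] {I : Ideal R}
    (hI : I ≤ maximalIdeal R) : I • (⊤ : Submodule R M) < ⊤ :=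
  (Submodule.top_ne_ideal_smul_of_le_jacobson_annihilator
    (hI.trans (maximalIdeal_le_jacobson _))).symm.lt_top

section DepthLocalization

variable {R : Type} [CommRing R] [IsNoetherianRing R] [IsLocalRing R]

theorem length_le_moduleDepth_of_isRegular {M : Type} [AddCommGroup M] [Module R M]
    [Module.Finite R M] {rs : List R} (hrs : ∀ x ∈ rs, x ∈ maximalIdeal R)
    (hreg : RingTheory.Sequence.IsRegular M rs) : (rs.length : ℕ∞) ≤ moduleDepth R M := by
  have : Nontrivial M := hreg.nontrivial
  have hsupp : Module.support R (ResidueField R) ⊆ PrimeSpectrum.zeroLocus (maximalIdeal R) := by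
    rw [Module.support_eq_zeroLocus]
    exact PrimeSpectrum.zeroLocus_anti_mono (Ideal.annihilator_quotient (I := maximalIdeal R)).ge
  exact le_moduleDepth_iff.2 fun i hi ↦
    ModuleCat.subsingleton_ext_of_exists_isRegular (maximalIdeal R) _ hsupp (ModuleCat.of R M)
      (smul_top_lt_top_of_le_maximalIdeal le_rfl) rs hrs hreg i (Nat.cast_lt.1 hi)

theorem natCast_le_moduleDepth_localization {M N : Type} [AddCommGroup M] [Module R M]
    [Module.Finite R M] [AddCommGroup N] [Module R N] (p : Ideal R) [p.IsPrime]
    [Module (Localization.AtPrime p) N] [IsScalarTower R (Localization.AtPrime p) N]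
    (f : M →ₗ[R] N) [IsLocalizedModule p.primeCompl f] {n : ℕ}
    (h : n + ringKrullDim (R ⧸ p) ≤ (moduleDepth R M : WithBot ℕ∞)) :
    n ≤ moduleDepth (Localization.AtPrime p) N := by
  rcases subsingleton_or_nontrivial N with _ | hN
  · exact moduleDepth_of_subsingleton (S := Localization.AtPrime p) (A := N) ▸ le_top
  have : Module.Finite (Localization.AtPrime p) N := .of_isLocalizedModule p.primeCompl f
  have : Nontrivial M := not_subsingleton_iff_nontrivial.1 fun _ ↦
    not_subsingleton N (IsLocalizedModule.subsingleton_of_subsingleton p.primeCompl f)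
  have : IsLocalRing (R ⧸ p) := .of_surjective' _ Ideal.Quotient.mk_surjective
  obtain ⟨r, hr⟩ := exists_ringKrullDim_eq_natCast (R ⧸ p)
  rw [hr] at h
  have hExt : ∀ i < n, Subsingleton (Abelian.Ext (ModuleCat.of R (R ⧸ p)) (ModuleCat.of R M) i) :=
    fun i hi ↦ subsingleton_ext_of_add_le_moduleDepth (r := r + 1)
      (by rw [Module.supportDim_quotient_eq_ringKrullDim, hr]; exact_mod_cast r.lt_succ_self)
      (le_trans (by norm_cast; lia) (show ((n + r : ℕ) : ℕ∞) ≤ _ by exact_mod_cast h))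
  obtain ⟨rs, rfl, hrs, hreg⟩ := ModuleCat.exists_isRegular_of_exists_subsingleton_ext p n
    (ModuleCat.of R M) (smul_top_lt_top_of_le_maximalIdeal (le_maximalIdeal Ideal.IsPrime.ne_top'))
    (ModuleCat.of R (R ⧸ p))
    (by simp [Module.support_eq_zeroLocus, Ideal.annihilator_quotient]) hExt
  rw [← rs.length_map (algebraMap R (Localization.AtPrime p))]
  refine length_le_moduleDepth_of_isRegular (List.forall_mem_map.2 fun x hx ↦ ?_)
    (hreg.toIsWeaklyRegular.isRegular_of_isLocalizedModule_of_mem (Localization.AtPrime p) p f hrs)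
  exact (IsLocalization.AtPrime.to_map_mem_maximal_iff _ p x).2 (hrs x hx)

theorem IsCMLocalRing.height_le_moduleDepth (hR : IsCMLocalRing R) (p : Ideal R) [p.IsPrime] :
    p.height ≤ moduleDepth (Localization.AtPrime p) (Localization.AtPrime p) := by
  obtain ⟨n, hn⟩ := ENat.ne_top_iff_exists.1 (p.height_ne_top Ideal.IsPrime.ne_top')
  have hdim := (height_add_ringKrullDim_quotient_le p).trans_eq hR.symm
  rw [← hn] at hdim ⊢
  exact natCast_le_moduleDepth_localization p (Algebra.linearMap R (Localization.AtPrime p)) hdim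

end DepthLocalization

section LocalizedKernel

variable {R : Type*} [CommRing R] {F M : Type*} [AddCommGroup F] [Module R F]
  [AddCommGroup M] [Module R M] (f : F →ₗ[R] M) (S : Submonoid R)

theorem localizedModule_map_subtype_ker_injective :
    Function.Injective (LocalizedModule.map S (LinearMap.ker f).subtype) :=
  LocalizedModule.map_injective S _ (LinearMap.ker f).subtype_injective

theorem localizedModule_map_subtype_ker_exact :
    Function.Exact (LocalizedModule.map S (LinearMap.ker f).subtype) (LocalizedModule.map S f) :=
  LocalizedModule.map_exact S _ _ f.exact_subtype_ker_map

instance free_localizedModule [Module.Free R F] :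
    Module.Free (Localization S) (LocalizedModule S F) :=
  Module.free_of_isLocalizedModule S (LocalizedModule.mkLinearMap S F)

theorem projective_of_exact_of_projective {A B C : Type*} [AddCommGroup A] [Module R A]
    [AddCommGroup B] [Module R B] [AddCommGroup C] [Module R C]
    [Module.Projective R B] [Module.Projective R C] {f : A →ₗ[R] B} {g : B →ₗ[R] C}
    (hf : Function.Injective f) (hg : Function.Surjective g) (hfg : Function.Exact f g) :
    Module.Projective R A := by
  have section_of_g := Module.projective_lifting_property g LinearMap.id hg
  obtain ⟨-, r, hr⟩ := (hfg.split_tfae'.out 0 1 rfl rfl).1 ⟨hf, section_of_g⟩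
  exact Module.Projective.of_split f r hr

end LocalizedKernel

section LocallyFree

/-- Local freeness on the punctured spectrum of `R`, without the finiteness and depth conditions
that `MemCM0` adds to it. -/
def IsLocallyFreeOnPuncturedSpectrum (R : Type*) [CommRing R] [IsLocalRing R] (M : Type*)
    [AddCommGroup M] [Module R M] : Prop :=
  ∀ (p : Ideal R) [p.IsPrime], p ≠ maximalIdeal R →
    Module.Free (Localization.AtPrime p) (LocalizedModule p.primeCompl M)

variable {R : Type*} [CommRing R] [IsLocalRing R]

theorem IsLocallyFreeOnPuncturedSpectrum.ker [IsNoetherianRing R] {F M : Type*} [AddCommGroup F]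
    [Module R F] [Module.Finite R F] [Module.Free R F] [AddCommGroup M] [Module R M]
    (hM : IsLocallyFreeOnPuncturedSpectrum R M) {f : F →ₗ[R] M} (hf : Function.Surjective f) :
    IsLocallyFreeOnPuncturedSpectrum R (LinearMap.ker f) := fun p _ hp ↦ by
  have := hM p hp
  have := projective_of_exact_of_projective
    (localizedModule_map_subtype_ker_injective f p.primeCompl)
    (LocalizedModule.map_surjective p.primeCompl f hf)
    (localizedModule_map_subtype_ker_exact f p.primeCompl)
  exact Module.free_of_flat_of_isLocalRing

theorem isLocallyFreeOnPuncturedSpectrum_quotient {J : Ideal R} {i : ℕ}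
    (hJ : maximalIdeal R ^ i ≤ J) : IsLocallyFreeOnPuncturedSpectrum R (R ⧸ J) := by
  intro p hp hpm
  have hJp : ¬ J ≤ p := fun h ↦ hpm <| (maximalIdeal.isMaximal R).eq_of_le hp.ne_top
    (hp.le_of_pow_le (hJ.trans h)) |>.symm
  have : Subsingleton (LocalizedModule p.primeCompl (R ⧸ J)) := by
    have : (⟨p, hp⟩ : PrimeSpectrum R) ∉ Module.support R (R ⧸ J) := by
      simpa [Module.support_eq_zeroLocus, Ideal.annihilator_quotient] using hJp
    exact Module.notMem_support_iff.1 this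
  infer_instance

end LocallyFree

section SerreCondition

/-- Serre's condition `(S_s)`: `depth M_p ≥ min s (dim R_p)` for every prime `p`, with `dim R_p`
written as the height of `p`. Over a Cohen-Macaulay ring each syzygy raises `s` by one, and
`s = dim R` is the maximal Cohen-Macaulay condition. -/
def SerreCondition (R : Type) [CommRing R] (s : ℕ∞) (M : Type) [AddCommGroup M] [Module R M] :
    Prop :=
  ∀ (p : Ideal R) [p.IsPrime],
    min s p.height ≤ moduleDepth (Localization.AtPrime p) (LocalizedModule p.primeCompl M)

variable {R : Type} [CommRing R]

theorem serreCondition_zero {M : Type} [AddCommGroup M] [Module R M] : SerreCondition R 0 M :=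
  fun p _ ↦ by simp

variable [IsLocalRing R]

theorem SerreCondition.ker [IsNoetherianRing R] (hR : IsCMLocalRing R) {F M : Type}
    [AddCommGroup F] [Module R F] [Module.Finite R F] [Module.Free R F]
    [AddCommGroup M] [Module R M] {s : ℕ∞} (hM : SerreCondition R s M) {f : F →ₗ[R] M}
    (hf : Function.Surjective f) : SerreCondition R (s + 1) (LinearMap.ker f) := fun p _ ↦ by
  refine le_trans (le_min ?_ ?_) (min_moduleDepth_le_left
    (localizedModule_map_subtype_ker_injective f p.primeCompl)
    (LocalizedModule.map_surjective p.primeCompl f hf)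
    (localizedModule_map_subtype_ker_exact f p.primeCompl))
  · exact (min_le_right _ _).trans
      ((hR.height_le_moduleDepth p).trans moduleDepth_self_le_of_free)
  · calc
      min (s + 1) p.height ≤ min (s + 1) (p.height + 1) := min_le_min_left _ le_self_add
      _ = min s p.height + 1 := by rw [min_add_add_right]
      _ ≤ _ := by gcongr; exact hM p

theorem isMCMModule_iff {M : Type} [AddCommGroup M] [Module R M] :
    IsMCMModule R M ↔ ∀ (p : Ideal R) [p.IsPrime],
      p.height ≤ moduleDepth (Localization.AtPrime p) (LocalizedModule p.primeCompl M) := by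
  refine forall_congr' fun p ↦ forall_congr' fun _ ↦ ?_
  rw [IsLocalization.AtPrime.ringKrullDim_eq_height p, WithBot.coe_le_coe]

theorem SerreCondition.isMCMModule {d : ℕ∞} (hd : ringKrullDim R = d) {M : Type} [AddCommGroup M]
    [Module R M] (hM : SerreCondition R d M) : IsMCMModule R M := by
  refine isMCMModule_iff.2 fun p hp ↦ ?_
  have height_le : p.height ≤ d := by
    simpa [hd] using Ideal.height_le_ringKrullDim_of_ne_top hp.ne_top
  simpa [height_le] using hM p

end SerreCondition

section FactorsThroughFree

/-- Multiplication by `a` on `X` factors through a finite free module, that is, `a` annihilates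
the stable endomorphism ring of `X`. -/
def FactorsThroughFree {R : Type*} [CommRing R] (a : R) (X : Type*) [AddCommGroup X]
    [Module R X] : Prop :=
  ∃ (r : ℕ) (α : X →ₗ[R] (Fin r → R)) (β : (Fin r → R) →ₗ[R] X), β ∘ₗ α = a • LinearMap.id

variable {R : Type*} [CommRing R] {a : R} {A B X : Type*} [AddCommGroup A] [Module R A]
  [AddCommGroup B] [Module R B] [AddCommGroup X] [Module R X]

theorem FactorsThroughFree.of_dvd {b : R} (h : FactorsThroughFree a X) (hab : a ∣ b) :
    FactorsThroughFree b X := by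
  obtain ⟨r, α, β, hβα⟩ := h
  obtain ⟨c, rfl⟩ := hab
  exact ⟨r, α, c • β, by rw [LinearMap.smul_comp, hβα, smul_smul, mul_comm]⟩

theorem FactorsThroughFree.of_equiv (h : FactorsThroughFree a A) (e : X ≃ₗ[R] A) :
    FactorsThroughFree a X := by
  obtain ⟨r, α, β, hβα⟩ := h
  exact ⟨r, α ∘ₗ e, e.symm ∘ₗ β, LinearMap.ext fun x ↦ by
    simpa using congrArg e.symm (LinearMap.congr_fun hβα (e x))⟩

theorem FactorsThroughFree.prod (hA : FactorsThroughFree a A) (hB : FactorsThroughFree a B) :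
    FactorsThroughFree a (A × B) := by
  obtain ⟨r, α, β, hβα⟩ := hA
  obtain ⟨s, γ, δ, hδγ⟩ := hB
  let e : ((Fin r → R) × (Fin s → R)) ≃ₗ[R] (Fin (r + s) → R) :=
    (LinearEquiv.sumArrowLequivProdArrow (Fin r) (Fin s) R R).symm.trans
      (LinearEquiv.funCongrLeft R R finSumFinEquiv.symm)
  refine ⟨r + s, e ∘ₗ α.prodMap γ, β.prodMap δ ∘ₗ e.symm, LinearMap.ext fun ⟨x, y⟩ ↦ ?_⟩
  simpa using And.intro (LinearMap.congr_fun hβα x) (LinearMap.congr_fun hδγ y)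

theorem factorsThroughFree_of_subsingleton [Subsingleton X] : FactorsThroughFree a X :=
  ⟨0, 0, 0, Subsingleton.elim _ _⟩

theorem exists_factorsThroughFree_of_projective_localizedModule (S : Submonoid R)
    [Module.FinitePresentation R X] [Module.Projective (Localization S) (LocalizedModule S X)] :
    ∃ s ∈ S, FactorsThroughFree s X := by
  obtain ⟨n, f, hf⟩ := Module.Finite.exists_fin' R X
  let ιF := LocalizedModule.mkLinearMap S (Fin n → R)
  let ιX := LocalizedModule.mkLinearMap S X
  obtain ⟨σ, hσ⟩ := Module.projective_lifting_property (LocalizedModule.map S f) LinearMap.id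
    (LocalizedModule.map_surjective S f hf)
  obtain ⟨α, s, hs⟩ := Module.FinitePresentation.exists_lift_of_isLocalizedModule S ιF
    (σ.restrictScalars R ∘ₗ ιX)
  have map_ιF (y : Fin n → R) : LocalizedModule.map S f (ιF y) = ιX (f y) := by
    simp [ιF, ιX, LocalizedModule.mkLinearMap_apply]
  have comp_eq_smul_id : ιX ∘ₗ f ∘ₗ α = ιX ∘ₗ ((s : R) • LinearMap.id) := by
    ext x
    have hsx : ιF (α x) = (s : R) • σ (ιX x) := LinearMap.congr_fun hs x
    have hσx : LocalizedModule.map S f (σ (ιX x)) = ιX x := LinearMap.congr_fun hσ (ιX x)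
    simp only [LinearMap.comp_apply, LinearMap.smul_apply, LinearMap.id_apply, map_smul]
    rw [← map_ιF, hsx, LinearMap.map_smul_of_tower, hσx]
  obtain ⟨t, ht⟩ :=
    Module.Finite.exists_smul_of_comp_eq_of_isLocalizedModule S ιX _ _ comp_eq_smul_id
  refine ⟨t * s, mul_mem t.2 s.2, n, (t : R) • α, f, ?_⟩
  rw [LinearMap.comp_smul, mul_smul]
  exact ht

end FactorsThroughFree

section TorOne

open TensorProduct

/-- `a` annihilates `Tor₁(X, N)`, computed as the kernel of `X ⊗ ker g → X ⊗ Rⁿ` for every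
finite free presentation `g : Rⁿ → N`. -/
def AnnihilatesTorOne {R : Type*} [CommRing R] (a : R) (X N : Type*) [AddCommGroup X]
    [Module R X] [AddCommGroup N] [Module R N] : Prop :=
  ∀ (n : ℕ) (g : (Fin n → R) →ₗ[R] N), Function.Surjective g →
    ∀ z : X ⊗[R] LinearMap.ker g, (LinearMap.ker g).subtype.lTensor X z = 0 → a • z = 0

variable {R : Type*} [CommRing R]

theorem rTensor_lTensor_comm {A B C D : Type*} [AddCommGroup A] [Module R A] [AddCommGroup B]
    [Module R B] [AddCommGroup C] [Module R C] [AddCommGroup D] [Module R D] (f : A →ₗ[R] B)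
    (g : C →ₗ[R] D) (z : A ⊗[R] C) :
    f.rTensor D (g.lTensor A z) = g.lTensor B (f.rTensor C z) := by
  rw [← LinearMap.comp_apply, ← LinearMap.comp_apply, LinearMap.rTensor_comp_lTensor,
    LinearMap.lTensor_comp_rTensor]

variable {a : R} {X N : Type*} [AddCommGroup X] [Module R X] [AddCommGroup N] [Module R N]

theorem FactorsThroughFree.annihilatesTorOne (h : FactorsThroughFree a X) :
    AnnihilatesTorOne a X N := by
  obtain ⟨r, α, β, hβα⟩ := h
  intro n g _ z hz
  have rTensor_α_eq_zero : α.rTensor (LinearMap.ker g) z = 0 := by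
    apply Module.Flat.lTensor_preserves_injective_linearMap (M := Fin r → R) _
      (LinearMap.ker g).subtype_injective
    rw [← rTensor_lTensor_comm, hz, map_zero, map_zero]
  calc
    a • z = (β ∘ₗ α).rTensor (LinearMap.ker g) z := by
      rw [hβα, LinearMap.rTensor_smul, LinearMap.rTensor_id, LinearMap.smul_apply,
        LinearMap.id_apply]
    _ = 0 := by rw [LinearMap.rTensor_comp_apply, rTensor_α_eq_zero, map_zero]

-- Both sides are `Tor₂(X, N)`; the chase runs through the double complex of the two presentations.
theorem AnnihilatesTorOne.of_ker {m n : ℕ} {q : (Fin m → R) →ₗ[R] X} {g : (Fin n → R) →ₗ[R] N}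
    (hq : Function.Surjective q) (hg : Function.Surjective g)
    (h : AnnihilatesTorOne a (LinearMap.ker q) N) : AnnihilatesTorOne a X (LinearMap.ker g) := by
  intro k p hp z hz
  let i := (LinearMap.ker q).subtype
  let j := (LinearMap.ker p).subtype
  have hiq : Function.Exact i q := q.exact_subtype_ker_map
  have hjp : Function.Exact j p := p.exact_subtype_ker_map
  obtain ⟨w, rfl⟩ := LinearMap.rTensor_surjective (LinearMap.ker p) hq z
  obtain ⟨u, hu⟩ : ∃ u, i.rTensor (Fin k → R) u = j.lTensor _ w :=
    (rTensor_exact (Fin k → R) hiq hq _).1 (by rw [rTensor_lTensor_comm]; exact hz)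
  have lTensor_u_mem_torOne : (LinearMap.ker g).subtype.lTensor _ (p.lTensor _ u) = 0 := by
    apply Module.Flat.rTensor_preserves_injective_linearMap (M := Fin n → R) i
      (LinearMap.ker q).subtype_injective
    rw [rTensor_lTensor_comm, rTensor_lTensor_comm, hu, ← LinearMap.lTensor_comp_apply _ p j,
      hjp.linearMap_comp_eq_zero]
    simp
  obtain ⟨y, hy⟩ : ∃ y, j.lTensor (LinearMap.ker q) y = a • u :=
    (lTensor_exact (LinearMap.ker q) hjp hp _).1
      (by rw [map_smul]; exact h n g hg _ lTensor_u_mem_torOne)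
  have rTensor_y : i.rTensor _ y = a • w := by
    apply Module.Flat.lTensor_preserves_injective_linearMap (M := Fin m → R) j
      (LinearMap.ker p).subtype_injective
    rw [← rTensor_lTensor_comm, hy, map_smul, hu, map_smul]
  rw [← map_smul, ← rTensor_y, ← LinearMap.rTensor_comp_apply, hiq.linearMap_comp_eq_zero,
    LinearMap.rTensor_zero, LinearMap.zero_apply]

end TorOne

section Syzygy

variable {R : Type u} [CommRing R] [IsNoetherianRing R]

/-- The kernel of a chosen surjection onto `M` from a finite free module; no minimality is imposed,
so this is the first syzygy only up to free summands. -/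
def syzygy (M : FGModuleCat.{u} R) : FGModuleCat.{u} R :=
  .of R (LinearMap.ker (Module.Finite.exists_fin' R M).choose_spec.choose)

theorem exists_syzygy_eq_ker (M : FGModuleCat.{u} R) :
    ∃ (n : ℕ) (f : (Fin n → R) →ₗ[R] M), Function.Surjective f ∧
      syzygy M = .of R (LinearMap.ker f) :=
  ⟨_, _, (Module.Finite.exists_fin' R M).choose_spec.choose_spec, rfl⟩

theorem AnnihilatesTorOne.of_syzygy {a : R} {M N : FGModuleCat.{u} R}
    (h : AnnihilatesTorOne a (syzygy M) N) : AnnihilatesTorOne a M (syzygy N) := by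
  obtain ⟨_, q, hq, hM⟩ := exists_syzygy_eq_ker M
  obtain ⟨_, g, hg, hN⟩ := exists_syzygy_eq_ker N
  rw [hM] at h
  rw [hN]
  exact h.of_ker hq hg

theorem AnnihilatesTorOne.of_syzygy_iterate {a : R} {d : ℕ} {M N : FGModuleCat.{u} R}
    (h : AnnihilatesTorOne a (syzygy^[d] M) N) : AnnihilatesTorOne a M (syzygy^[d] N) := by
  induction d generalizing M with
  | zero => exact h
  | succ d ih =>
    rw [Function.iterate_succ_apply']
    exact (ih h).of_syzygy

theorem hasProjectiveDimensionLE_localizedModule_of_syzygy {M : FGModuleCat.{u} R}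
    (S : Submonoid R) {t : ℕ} (h : HasProjectiveDimensionLE
      (ModuleCat.of (Localization S) (LocalizedModule S (syzygy M))) t) :
    HasProjectiveDimensionLE (ModuleCat.of (Localization S) (LocalizedModule S M)) (t + 1) := by
  obtain ⟨n, f, hf, hM⟩ := exists_syzygy_eq_ker M
  rw [hM] at h
  exact (hasProjectiveDimensionLE_succ_iff_of_exact (localizedModule_map_subtype_ker_injective f S)
    (LocalizedModule.map_surjective S f hf) (localizedModule_map_subtype_ker_exact f S)).2 h

theorem hasProjectiveDimensionLE_localizedModule_of_syzygy_iterate {M : FGModuleCat.{u} R}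
    (S : Submonoid R) {t d : ℕ} (h : HasProjectiveDimensionLE
      (ModuleCat.of (Localization S) (LocalizedModule S ↑(syzygy^[d] M))) t) :
    HasProjectiveDimensionLE (ModuleCat.of (Localization S) (LocalizedModule S M)) (t + d) := by
  induction d generalizing M with
  | zero => exact h
  | succ d ih => exact hasProjectiveDimensionLE_localizedModule_of_syzygy S (ih h)

theorem IsLocallyFreeOnPuncturedSpectrum.syzygy_iterate [IsLocalRing R] {M : FGModuleCat.{u} R}
    (hM : IsLocallyFreeOnPuncturedSpectrum R M) (d : ℕ) :
    IsLocallyFreeOnPuncturedSpectrum R ↑(syzygy^[d] M) := by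
  induction d with
  | zero => exact hM
  | succ d ih =>
    obtain ⟨_, f, hf, hker⟩ := exists_syzygy_eq_ker (syzygy^[d] M)
    rw [Function.iterate_succ_apply', hker]
    exact ih.ker hf

end Syzygy

section SyzygyDepth

variable {R : Type} [CommRing R] [IsNoetherianRing R] [IsLocalRing R]

theorem serreCondition_syzygy_iterate (hR : IsCMLocalRing R) (M : FGModuleCat.{0} R) (d : ℕ) :
    SerreCondition R d ↑(syzygy^[d] M) := by
  induction d with
  | zero => exact_mod_cast serreCondition_zero
  | succ d ih =>
    obtain ⟨_, f, hf, hker⟩ := exists_syzygy_eq_ker (syzygy^[d] M)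
    rw [Function.iterate_succ_apply', hker]
    exact_mod_cast ih.ker hR hf

theorem memCM0_syzygy_iterate (hR : IsCMLocalRing R) {d : ℕ} (hd : ringKrullDim R = d)
    {M : FGModuleCat.{0} R} (hM : IsLocallyFreeOnPuncturedSpectrum R M) :
    MemCM0 R (syzygy^[d] M).obj :=
  ⟨(syzygy^[d] M).property, (serreCondition_syzygy_iterate hR M d).isMCMModule hd,
    hM.syzygy_iterate d⟩

end SyzygyDepth

section LocalFreeness

open TensorProduct

theorem one_tmul_eq_zero_iff_mem_smul_top {R M : Type*} [CommRing R] [AddCommGroup M] [Module R M]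
    {I : Ideal R} {x : M} : (1 : R ⧸ I) ⊗ₜ[R] x = 0 ↔ x ∈ I • (⊤ : Submodule R M) := by
  rw [← (quotTensorEquivQuotSMul M I).map_eq_zero_iff, quotTensorEquivQuotSMul_mk_one_tmul,
    Submodule.Quotient.mk_eq_zero]

theorem exists_one_tmul_eq {R M : Type*} [CommRing R] [AddCommGroup M] [Module R M] (I : Ideal R)
    (z : (R ⧸ I) ⊗[R] M) : ∃ x : M, (1 : R ⧸ I) ⊗ₜ[R] x = z := by
  obtain ⟨y, rfl⟩ := (quotTensorEquivQuotSMul M I).symm.surjective z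
  obtain ⟨x, rfl⟩ := Submodule.Quotient.mk_surjective _ y
  exact ⟨x, (quotTensorEquivQuotSMul_symm_mk I x).symm⟩

theorem free_of_exact_of_forall_mem_smul_top {S A B C : Type*} [CommRing S] [IsLocalRing S]
    [AddCommGroup A] [AddCommGroup B] [AddCommGroup C] [Module S A] [Module S B] [Module S C]
    [Module.Finite S A] [Module.Finite S B] [Module.Free S B] (f : A →ₗ[S] B) (g : B →ₗ[S] C)
    (hg : Function.Surjective g) (hfg : Function.Exact f g)
    (h : ∀ x, f x ∈ maximalIdeal S • (⊤ : Submodule S B) →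
      x ∈ maximalIdeal S • (⊤ : Submodule S A)) : Module.Free S C := by
  refine Module.free_of_lTensor_residueField_injective f g hg hfg ?_
  refine (injective_iff_map_eq_zero _).2 fun z hz ↦ ?_
  obtain ⟨x, rfl⟩ := exists_one_tmul_eq (maximalIdeal S) z
  exact one_tmul_eq_zero_iff_mem_smul_top.2 (h x (one_tmul_eq_zero_iff_mem_smul_top.1 hz))

theorem mk_mem_maximalIdeal_smul_top_iff {R M : Type*} [CommRing R] [AddCommGroup M] [Module R M]
    (p : Ideal R) [p.IsPrime] (x : M) (s : p.primeCompl) :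
    LocalizedModule.mk x s ∈ maximalIdeal (Localization.AtPrime p) •
      (⊤ : Submodule (Localization.AtPrime p) (LocalizedModule p.primeCompl M)) ↔
    ∃ t ∉ p, t • x ∈ p • (⊤ : Submodule R M) := by
  rw [← Localization.AtPrime.map_eq_maximalIdeal,
    ← Submodule.localized'_top _ p.primeCompl (LocalizedModule.mkLinearMap p.primeCompl M),
    ← Ideal.localized'_eq_map _ p.primeCompl, ← Submodule.localized'_smul,
    Submodule.mem_localized']
  simp only [← IsLocalizedModule.mk_eq_mk', LocalizedModule.mk_eq]
  constructor
  · rintro ⟨w, hw, u, t, htw⟩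
    refine ⟨t * u, (t * u).2, ?_⟩
    rw [mul_smul]
    exact htw ▸ Submodule.smul_mem _ _ (Submodule.smul_mem _ _ hw)
  · rintro ⟨t, ht, htx⟩
    exact ⟨t • x, htx, ⟨t, ht⟩ * s, 1, by simp [Submonoid.smul_def, smul_smul, mul_comm]⟩

variable {R : Type*} [CommRing R] [IsNoetherianRing R]

theorem mem_smul_top_of_forall_mem_sup_pow_smul_top [IsLocalRing R] {M : Type*} [AddCommGroup M]
    [Module R M] [Module.Finite R M] (I : Ideal R) {x : M}
    (h : ∀ i : ℕ, x ∈ (I ⊔ maximalIdeal R ^ i) • (⊤ : Submodule R M)) :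
    x ∈ I • (⊤ : Submodule R M) := by
  rw [← Submodule.Quotient.mk_eq_zero, ← Submodule.mem_bot R,
    ← Ideal.iInf_pow_smul_eq_bot_of_isLocalRing (M := M ⧸ I • (⊤ : Submodule R M))
      (maximalIdeal R) (maximalIdeal.isMaximal R).ne_top, Submodule.mem_iInf]
  intro i
  have := Submodule.mem_map_of_mem (f := (I • (⊤ : Submodule R M)).mkQ) (h i)
  rw [Submodule.sup_smul, Submodule.map_sup, Submodule.mkQ_map_self, bot_sup_eq,
    Submodule.map_smul''] at this
  exact Submodule.smul_mono le_rfl le_top this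

theorem annihilatesTorOne_quotient_of_forall_sup_pow [IsLocalRing R] {I : Ideal R} {a : R}
    {N : Type*} [AddCommGroup N] [Module R N]
    (h : ∀ i : ℕ, AnnihilatesTorOne a (R ⧸ (I ⊔ maximalIdeal R ^ i)) N) :
    AnnihilatesTorOne a (R ⧸ I) N := by
  intro n g hg z hz
  obtain ⟨x, rfl⟩ := exists_one_tmul_eq I z
  rw [LinearMap.lTensor_tmul, one_tmul_eq_zero_iff_mem_smul_top] at hz
  rw [← tmul_smul, one_tmul_eq_zero_iff_mem_smul_top]
  refine mem_smul_top_of_forall_mem_sup_pow_smul_top I fun i ↦ ?_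
  rw [← one_tmul_eq_zero_iff_mem_smul_top, tmul_smul]
  refine h i n g hg _ ?_
  rw [LinearMap.lTensor_tmul, one_tmul_eq_zero_iff_mem_smul_top]
  exact Submodule.smul_mono_left le_sup_left hz

theorem AnnihilatesTorOne.free_localizedModule {p : Ideal R} [hp : p.IsPrime] {a : R} (ha : a ∉ p)
    {N : Type*} [AddCommGroup N] [Module R N] [Module.Finite R N]
    (h : AnnihilatesTorOne a (R ⧸ p) N) :
    Module.Free (Localization.AtPrime p) (LocalizedModule p.primeCompl N) := by
  obtain ⟨n, g, hg⟩ := Module.Finite.exists_fin' R N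
  refine free_of_exact_of_forall_mem_smul_top
    (A := LocalizedModule p.primeCompl (LinearMap.ker g)) _ _
    (LocalizedModule.map_surjective _ g hg) (localizedModule_map_subtype_ker_exact g p.primeCompl)
    fun x hx ↦ ?_
  induction x using LocalizedModule.induction_on with
  | _ m s =>
    rw [LocalizedModule.map_mk, mk_mem_maximalIdeal_smul_top_iff] at hx
    obtain ⟨t, ht, htm⟩ := hx
    refine (mk_mem_maximalIdeal_smul_top_iff p m s).2
      ⟨a * t, fun hat ↦ (hp.mem_or_mem hat).elim ha ht, ?_⟩
    rw [mul_smul, ← one_tmul_eq_zero_iff_mem_smul_top, tmul_smul]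
    refine h n g hg _ ?_
    rw [LinearMap.lTensor_tmul, one_tmul_eq_zero_iff_mem_smul_top]
    exact htm

theorem nonempty_linearEquiv_residueField_localizedModule_quotient {R : Type*} [CommRing R]
    (p : Ideal R) [p.IsPrime] :
    Nonempty (ResidueField (Localization.AtPrime p) ≃ₗ[Localization.AtPrime p]
      LocalizedModule p.primeCompl (R ⧸ p)) := by
  let ι := Algebra.linearMap R (Localization.AtPrime p)
  have localized'_eq_maximalIdeal : p.localized' (Localization.AtPrime p) p.primeCompl ι =
      maximalIdeal (Localization.AtPrime p) := by
    rw [Ideal.localized'_eq_map, Localization.AtPrime.map_eq_maximalIdeal]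
  have := IsLocalization.linearMap_compatibleSMul p.primeCompl
  exact ⟨(Submodule.quotEquivOfEq _ _ localized'_eq_maximalIdeal.symm).trans
    ((IsLocalizedModule.linearEquiv p.primeCompl
      (p.toLocalizedQuotient' (Localization.AtPrime p) p.primeCompl ι)
      (LocalizedModule.mkLinearMap p.primeCompl (R ⧸ p))).restrictScalars _)⟩

end LocalFreeness

section FiniteProjectiveDimension

theorem hasProjectiveDimensionLE_zero_iff {S M : Type u} [Ring S] [AddCommGroup M] [Module S M] :
    HasProjectiveDimensionLE (ModuleCat.of S M) 0 ↔ Module.Projective S M :=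
  (projective_iff_hasProjectiveDimensionLE_zero _).symm.trans (IsProjective.iff_projective M).symm

theorem hasProjectiveDimensionLE_of_comp_eq_id {S M N : Type u} [Ring S] [AddCommGroup M]
    [AddCommGroup N] [Module S M] [Module S N] {i : N →ₗ[S] M} {r : M →ₗ[S] N}
    (hri : r ∘ₗ i = LinearMap.id) {n : ℕ} (h : HasProjectiveDimensionLE (ModuleCat.of S M) n) :
    HasProjectiveDimensionLE (ModuleCat.of S N) n :=
  have := h
  Retract.hasProjectiveDimensionLT (Y := ModuleCat.of S M)
    ⟨ModuleCat.ofHom i, ModuleCat.ofHom r, ModuleCat.hom_ext hri⟩ _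

theorem smul_eq_zero_of_mem_annihilator_of_mem_smul_top {S M : Type*} [CommRing S]
    [AddCommGroup M] [Module S M] {I : Ideal S} {s : S} (hs : s ∈ Module.annihilator S I) {y : M}
    (hy : y ∈ I • (⊤ : Submodule S M)) : s • y = 0 := by
  refine Submodule.smul_induction_on hy (fun a ha n _ ↦ ?_) fun a b ha hb ↦ ?_
  · have hsa : s * a = 0 := congrArg Subtype.val (Module.mem_annihilator.1 hs ⟨a, ha⟩)
    rw [smul_smul, hsa, zero_smul]
  · rw [smul_add, ha, hb, add_zero]

theorem mem_maximalIdeal_smul_top_of_smul_eq_zero {S M : Type*} [CommRing S] [IsLocalRing S]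
    [AddCommGroup M] [Module S M] [Module.Free S M] [Module.Finite S M] {s : S} (hs : s ≠ 0) {x : M}
    (hx : s • x = 0) : x ∈ maximalIdeal S • (⊤ : Submodule S M) := by
  let b := Module.finBasis S M
  rw [← b.sum_repr x]
  refine Submodule.sum_mem _ fun i _ ↦ Submodule.smul_mem_smul ?_ trivial
  have hcoeff : s * b.repr x i = 0 := by
    rw [← smul_eq_mul, ← Finsupp.smul_apply, ← map_smul, hx, map_zero, Finsupp.zero_apply]
  exact (mem_maximalIdeal _).2 fun hunit ↦ hs (hunit.mul_left_eq_zero.1 hcoeff)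

-- The case of depth zero in the Auslander–Buchsbaum formula.
theorem free_of_hasProjectiveDimensionLE_of_annihilator_maximalIdeal {S : Type u} [CommRing S]
    [IsLocalRing S] [IsNoetherianRing S] {s : S} (hs : s ≠ 0)
    (hann : s ∈ Module.annihilator S (maximalIdeal S)) {n : ℕ} {M : Type u} [AddCommGroup M]
    [Module S M] [Module.Finite S M] (h : HasProjectiveDimensionLE (ModuleCat.of S M) n) :
    Module.Free S M := by
  induction n generalizing M with
  | zero =>
    have := hasProjectiveDimensionLE_zero_iff.1 h
    exact Module.free_of_flat_of_isLocalRing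
  | succ n ih =>
    obtain ⟨r, f, hf⟩ := Module.Finite.exists_fin' S M
    have hexact := LinearMap.exact_subtype_ker_map f
    have : Module.Free S (LinearMap.ker f) :=
      ih ((hasProjectiveDimensionLE_succ_iff_of_exact Subtype.val_injective hf hexact).1 h)
    exact free_of_exact_of_forall_mem_smul_top _ f hf hexact fun x hx ↦
      mem_maximalIdeal_smul_top_of_smul_eq_zero hs
        (Subtype.ext (smul_eq_zero_of_mem_annihilator_of_mem_smul_top hann hx))

theorem quotSMulTop_map_injective {S A B C : Type*} [CommRing S] [AddCommGroup A] [AddCommGroup B]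
    [AddCommGroup C] [Module S A] [Module S B] [Module S C] {f : A →ₗ[S] B} {g : B →ₗ[S] C}
    (hf : Function.Injective f) (hfg : Function.Exact f g) {x : S} (hx : IsSMulRegular C x) :
    Function.Injective (QuotSMulTop.map x f) := by
  have hzero : Function.Exact (0 : Unit →ₗ[S] A) f := (LinearMap.exact_zero_iff_injective _ _).2 hf
  rw [← LinearMap.exact_zero_iff_injective (QuotSMulTop x Unit), ← map_zero (QuotSMulTop.map x)]
  exact QuotSMulTop.map_first_exact_on_four_term_exact_of_isSMulRegular_last hzero hfg hx

theorem hasProjectiveDimensionLE_quotSMulTop {S : Type u} [CommRing S] [IsNoetherianRing S] {x : S}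
    (hx : IsSMulRegular S x) {n : ℕ} {M : Type u} [AddCommGroup M] [Module S M] [Module.Finite S M]
    (hM : IsSMulRegular M x) (h : HasProjectiveDimensionLE (ModuleCat.of S M) n) :
    HasProjectiveDimensionLE (ModuleCat.of (S ⧸ Ideal.span {x}) (QuotSMulTop x M)) n := by
  have hsurj : Function.Surjective (algebraMap S (S ⧸ Ideal.span {x})) :=
    Ideal.Quotient.mk_surjective
  induction n generalizing M with
  | zero =>
    have := hasProjectiveDimensionLE_zero_iff.1 h
    exact hasProjectiveDimensionLE_zero_iff.2 (.of_equiv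
      ((QuotSMulTop.equivQuotTensor x M).extendScalarsOfSurjective hsurj).symm)
  | succ n ih =>
    obtain ⟨r, f, hf⟩ := Module.Finite.exists_fin' S M
    have hexact := LinearMap.exact_subtype_ker_map f
    have hreg : IsSMulRegular (LinearMap.ker f) x :=
      (IsSMulRegular.pi fun _ ↦ hx).of_injective (LinearMap.ker f).subtype Subtype.val_injective
    have hker := ih hreg
      ((hasProjectiveDimensionLE_succ_iff_of_exact Subtype.val_injective hf hexact).1 h)
    exact (hasProjectiveDimensionLE_succ_iff_of_exact
      (f := (QuotSMulTop.map x (LinearMap.ker f).subtype).extendScalarsOfSurjective hsurj)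
      (g := (QuotSMulTop.map x f).extendScalarsOfSurjective hsurj)
      (quotSMulTop_map_injective Subtype.val_injective hexact hM)
      (QuotSMulTop.map_surjective x hf) (QuotSMulTop.map_exact x hexact hf)).2 hker

theorem hasProjectiveDimensionLE_maximalIdeal {S : Type u} [CommRing S] [IsLocalRing S] {n : ℕ}
    (h : HasProjectiveDimensionLE (ModuleCat.of S (ResidueField S)) n) :
    HasProjectiveDimensionLE (ModuleCat.of S (maximalIdeal S)) n :=
  have := h
  (hasProjectiveDimensionLE_succ_iff_of_exact (g := (maximalIdeal S).mkQ) Subtype.val_injective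
    (Submodule.mkQ_surjective _) (LinearMap.exact_subtype_mkQ _)).1
    (hasProjectiveDimensionLT_of_ge (ModuleCat.of S (ResidueField S)) (n + 1) _ n.succ.le_succ)

end FiniteProjectiveDimension

section Serre

open TensorProduct

theorem exists_residueField_retract {S M : Type*} [CommRing S] [IsLocalRing S] [AddCommGroup M]
    [Module S M] {y : M} (hy : y ∉ maximalIdeal S • (⊤ : Submodule S M))
    (hann : ∀ a ∈ maximalIdeal S, a • y = 0) :
    ∃ (i : ResidueField S →ₗ[S] M) (r : M →ₗ[S] ResidueField S), r ∘ₗ i = LinearMap.id := by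
  obtain ⟨φ, hφ⟩ := Module.Projective.exists_dual_eq_one (ResidueField S)
    (x := (1 : ResidueField S) ⊗ₜ[S] y) (one_tmul_eq_zero_iff_mem_smul_top.not.2 hy)
  refine ⟨(maximalIdeal S).liftQ (LinearMap.toSpanSingleton S M y) hann,
    φ.restrictScalars S ∘ₗ TensorProduct.mk S (ResidueField S) M 1, ?_⟩
  refine Submodule.linearMap_qext _ (LinearMap.ext_ring ?_)
  change φ (1 ⊗ₜ[S] ((1 : S) • y)) = 1
  rw [one_smul, hφ]

variable {S : Type u} [CommRing S] [IsLocalRing S] {x : S}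

theorem isLocalRing_quotient_span_singleton (hx : x ∈ maximalIdeal S) :
    IsLocalRing (S ⧸ Ideal.span {x}) :=
  have : Nontrivial (S ⧸ Ideal.span {x}) :=
    Ideal.Quotient.nontrivial_iff.2 fun h ↦ (maximalIdeal.isMaximal S).ne_top
      (top_le_iff.1 (h ▸ (Ideal.span_singleton_le_iff_mem _).2 hx))
  .of_surjective' _ Ideal.Quotient.mk_surjective

theorem comap_quotientMk_maximalIdeal (I : Ideal S) [IsLocalRing (S ⧸ I)] :
    (maximalIdeal (S ⧸ I)).comap (Ideal.Quotient.mk I) = maximalIdeal S :=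
  have := IsLocalHom.of_surjective _ (Ideal.Quotient.mk_surjective (I := I))
  ((local_hom_TFAE (Ideal.Quotient.mk I)).out 0 4).1 this

-- The class of `x` spans the copy of the residue field: it is nonzero modulo `m²`.
theorem exists_residueField_retract_quotSMulTop_maximalIdeal (hx : x ∈ maximalIdeal S)
    (hx2 : x ∉ maximalIdeal S ^ 2) [IsLocalRing (S ⧸ Ideal.span {x})] :
    ∃ (i : ResidueField (S ⧸ Ideal.span {x}) →ₗ[S ⧸ Ideal.span {x}]
        QuotSMulTop x (maximalIdeal S))
      (r : QuotSMulTop x (maximalIdeal S) →ₗ[S ⧸ Ideal.span {x}]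
        ResidueField (S ⧸ Ideal.span {x})), r ∘ₗ i = LinearMap.id := by
  have hmem {a : S} :
      Ideal.Quotient.mk (Ideal.span {x}) a ∈ maximalIdeal _ ↔ a ∈ maximalIdeal S := by
    rw [← Ideal.mem_comap, comap_quotientMk_maximalIdeal]
  have htoCotangent {a : S} (ha : a ∈ maximalIdeal S) (z : maximalIdeal S) :
      (maximalIdeal S).toCotangent (a • z) = 0 :=
    (Ideal.toCotangent_eq_zero _ _).2 (pow_two (maximalIdeal S) ▸ Ideal.mul_mem_mul ha z.2)
  let q : QuotSMulTop x (maximalIdeal S) →ₗ[S] (maximalIdeal S).Cotangent :=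
    Submodule.liftQ _ (maximalIdeal S).toCotangent (by
      rintro _ ⟨z, -, rfl⟩
      exact htoCotangent hx z)
  have hq {w : QuotSMulTop x (maximalIdeal S)}
      (hw : w ∈ maximalIdeal (S ⧸ Ideal.span {x}) •
        (⊤ : Submodule (S ⧸ Ideal.span {x}) (QuotSMulTop x (maximalIdeal S)))) : q w = 0 := by
    refine Submodule.smul_induction_on hw (fun a ha z _ ↦ ?_) fun v w hv hw ↦ ?_
    · obtain ⟨a, rfl⟩ := Ideal.Quotient.mk_surjective a
      obtain ⟨z, rfl⟩ := Submodule.Quotient.mk_surjective _ z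
      exact htoCotangent (hmem.1 ha) z
    · rw [map_add, hv, hw, add_zero]
  refine exists_residueField_retract (y := Submodule.Quotient.mk ⟨x, hx⟩)
    (fun hy ↦ hx2 ((Ideal.toCotangent_eq_zero _ _).1 (hq hy))) fun a ha ↦ ?_
  obtain ⟨a, rfl⟩ := Ideal.Quotient.mk_surjective a
  exact (Submodule.Quotient.mk_eq_zero _).2 ⟨⟨a, hmem.1 ha⟩, trivial, Subtype.ext (mul_comm _ _)⟩

variable [IsNoetherianRing S]

theorem exists_mem_nonZeroDivisors_notMem_sq
    (h : ¬ Disjoint (maximalIdeal S : Set S) (nonZeroDivisors S : Set S)) :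
    ∃ x ∈ maximalIdeal S, x ∉ maximalIdeal S ^ 2 ∧ x ∈ nonZeroDivisors S := by
  obtain ⟨y, hym, hy⟩ := Set.not_disjoint_iff.1 h
  by_contra! hcon
  have hcover : (maximalIdeal S : Set S) ⊆
      ⋃ I ∈ insert (maximalIdeal S ^ 2) (associatedPrimes S S), (I : Set S) := by
    rw [Set.biUnion_insert, biUnion_associatedPrimes_eq_compl_nonZeroDivisors]
    exact fun x hx ↦ or_iff_not_imp_left.2 (hcon x hx)
  obtain ⟨I, hI, hle⟩ := (Ideal.subset_union_prime_finite (f := id)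
    ((associatedPrimes.finite S S).insert _) (maximalIdeal S ^ 2) (maximalIdeal S ^ 2)
    fun I hI hne _ ↦ (hI.resolve_left hne).isPrime).1 hcover
  rcases hI with rfl | hI
  · have hbot : maximalIdeal S = ⊥ := Submodule.eq_bot_of_le_smul_of_le_jacobson_bot
      (maximalIdeal S) _ (IsNoetherian.noetherian _) (hle.trans_eq (pow_two _))
      (maximalIdeal_le_jacobson _)
    exact nonZeroDivisors.ne_zero hy ((Submodule.mem_bot S).1 (hbot ▸ hym))
  · have hassoc : y ∈ ⋃ p ∈ associatedPrimes S S, (p : Set S) := Set.mem_biUnion hI (hle hym)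
    rw [biUnion_associatedPrimes_eq_compl_nonZeroDivisors] at hassoc
    exact hassoc hy

theorem spanFinrank_maximalIdeal_le_quotient_add_one [IsLocalRing (S ⧸ Ideal.span {x})] :
    (maximalIdeal S).spanFinrank ≤ (maximalIdeal (S ⧸ Ideal.span {x})).spanFinrank + 1 := by
  classical
  obtain ⟨s, hcard, hs⟩ := Submodule.FG.exists_span_finset_card_eq_spanFinrank
    (maximalIdeal (S ⧸ Ideal.span {x})).fg_of_isNoetherianRing
  let t := s.image (Function.surjInv Ideal.Quotient.mk_surjective)
  have hmap : (Ideal.span (t : Set S)).map (Ideal.Quotient.mk (Ideal.span {x})) =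
      maximalIdeal (S ⧸ Ideal.span {x}) := by
    rw [Ideal.map_span, ← hs, Finset.coe_image,
      (Function.rightInverse_surjInv Ideal.Quotient.mk_surjective).leftInverse.image_image]
  have hspan : Submodule.span S ((insert x t : Finset S) : Set S) = maximalIdeal S := by
    rw [Finset.coe_insert, ← Ideal.span, Ideal.span_insert,
      ← comap_quotientMk_maximalIdeal (Ideal.span {x}), ← hmap,
      Ideal.comap_map_of_surjective _ Ideal.Quotient.mk_surjective, ← RingHom.ker_eq_comap_bot,
      Ideal.mk_ker, sup_comm]
  calc (maximalIdeal S).spanFinrank ≤ (insert x t).card := by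
        rw [← hspan, ← Set.ncard_coe_finset]
        exact Submodule.spanFinrank_span_le_ncard_of_finite (Finset.finite_toSet _)
    _ ≤ t.card + 1 := Finset.card_insert_le _ _
    _ ≤ s.card + 1 := by gcongr; exact Finset.card_image_le
    _ = _ := by rw [hcard]

theorem maximalIdeal_eq_bot_of_disjoint_nonZeroDivisors
    (hdisj : Disjoint (maximalIdeal S : Set S) (nonZeroDivisors S : Set S)) {t : ℕ}
    (h : HasProjectiveDimensionLE (ModuleCat.of S (ResidueField S)) t) : maximalIdeal S = ⊥ := by
  obtain ⟨s, hs, hs0⟩ :=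
    SetLike.exists_of_lt (Ideal.bot_lt_annihilator_of_disjoint_nonZeroDivisors hdisj)
  have := free_of_hasProjectiveDimensionLE_of_annihilator_maximalIdeal hs0 hs h
  calc maximalIdeal S = Module.annihilator S (ResidueField S) := Ideal.annihilator_quotient.symm
    _ = ⊥ := Module.annihilator_eq_bot.2 inferInstance

theorem isRegularLocalRing_of_quotient (hx : x ∈ maximalIdeal S) (hreg : IsSMulRegular S x)
    [IsRegularLocalRing (S ⧸ Ideal.span {x})] : IsRegularLocalRing S := by
  refine .of_spanFinrank_maximalIdeal_le _ ?_
  rw [← ringKrullDim_quotient_span_singleton_succ_eq_ringKrullDim hreg hx,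
    ← (isRegularLocalRing_iff (S ⧸ Ideal.span {x})).1 inferInstance]
  exact_mod_cast spanFinrank_maximalIdeal_le_quotient_add_one

theorem isRegularLocalRing_of_hasProjectiveDimensionLE_residueField {t : ℕ}
    (h : HasProjectiveDimensionLE (ModuleCat.of S (ResidueField S)) t) : IsRegularLocalRing S := by
  obtain ⟨n, hn⟩ := exists_ringKrullDim_eq_natCast S
  induction n using Nat.strong_induction_on generalizing S with
  | _ n ih =>
  by_cases hdisj : Disjoint (maximalIdeal S : Set S) (nonZeroDivisors S : Set S)
  · refine .of_spanFinrank_maximalIdeal_le _ ?_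
    rw [maximalIdeal_eq_bot_of_disjoint_nonZeroDivisors hdisj h, Submodule.spanFinrank_bot]
    exact ringKrullDim_nonneg_of_nontrivial
  · obtain ⟨x, hx, hx2, hx0⟩ := exists_mem_nonZeroDivisors_notMem_sq hdisj
    have hreg : IsSMulRegular S x := Module.Flat.isSMulRegular_of_nonZeroDivisors hx0
    have := isLocalRing_quotient_span_singleton hx
    obtain ⟨n', hn'⟩ := exists_ringKrullDim_eq_natCast (S ⧸ Ideal.span {x})
    have hdim : n' + 1 = n := by
      have := ringKrullDim_quotient_span_singleton_succ_eq_ringKrullDim hreg hx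
      rw [hn, hn'] at this
      exact_mod_cast this
    have hquot := hasProjectiveDimensionLE_quotSMulTop hreg
      (hreg.of_injective (maximalIdeal S).subtype Subtype.val_injective)
      (hasProjectiveDimensionLE_maximalIdeal h)
    obtain ⟨i, r, hri⟩ := exists_residueField_retract_quotSMulTop_maximalIdeal hx hx2
    have := ih n' (by lia) (hasProjectiveDimensionLE_of_comp_eq_id hri hquot) hn'
    exact isRegularLocalRing_of_quotient hx hreg

end Serre

theorem isRegularLocal_of_isRegularLocalRing (S : Type) [CommRing S] [IsRegularLocalRing S] :
    IsRegularLocal S := by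
  obtain ⟨s, hcard, hs⟩ := Submodule.FG.exists_span_finset_card_eq_spanFinrank
    (maximalIdeal S).fg_of_isNoetherianRing
  exact ⟨inferInstance, s, hs, hcard ▸ (isRegularLocalRing_iff S).1 inferInstance⟩

theorem localizedModule_map_comp_eq_id {R : Type*} [CommRing R] {A X : Type*} [AddCommGroup A]
    [Module R A] [AddCommGroup X] [Module R X] (S : Submonoid R) {i : A →ₗ[R] X} {r : X →ₗ[R] A}
    (hri : r ∘ₗ i = LinearMap.id) :
    LocalizedModule.map S r ∘ₗ LocalizedModule.map S i = LinearMap.id := by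
  ext x
  induction x using LocalizedModule.induction_on with
  | _ m s =>
    simp only [LinearMap.comp_apply, LocalizedModule.map_mk, LinearMap.id_apply,
      show r (i m) = m from LinearMap.congr_fun hri m]

section NumberOfGenerators

open TensorProduct

variable {R : Type*} [CommRing R] [IsLocalRing R] {A B X : Type*} [AddCommGroup A] [Module R A]
  [Module.Finite R A] [AddCommGroup B] [Module R B] [Module.Finite R B] [AddCommGroup X]
  [Module R X]

theorem finrank_residueField_tensorProduct_pos [Nontrivial A] :
    0 < Module.finrank (ResidueField R) (ResidueField R ⊗[R] A) := by
  have : Nontrivial (ResidueField R ⊗[R] A) := by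
    rw [← not_subsingleton_iff_nontrivial, IsLocalRing.subsingleton_tensorProduct]
    exact not_subsingleton A
  exact Module.finrank_pos

theorem finrank_residueField_tensorProduct_eq_add (e : X ≃ₗ[R] A × B) :
    Module.finrank (ResidueField R) (ResidueField R ⊗[R] X) =
      Module.finrank (ResidueField R) (ResidueField R ⊗[R] A) +
        Module.finrank (ResidueField R) (ResidueField R ⊗[R] B) := by
  rw [← Module.finrank_prod]
  exact ((e.baseChange R (ResidueField R) _ _).trans
    (TensorProduct.prodRight R (ResidueField R) (ResidueField R) A B)).finrank_eq

end NumberOfGenerators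

section FiniteType

open TensorProduct

variable {R : Type} [CommRing R]

theorem exists_equiv_prod_of_not_indecomposableModule {X : Type} [AddCommGroup X] [Module R X]
    [Nontrivial X] (h : ¬ IndecomposableModule R X) :
    ∃ A B : ModuleCat.{0} R, Nontrivial A ∧ Nontrivial B ∧ Nonempty (X ≃ₗ[R] A × B) := by
  simp only [IndecomposableModule, not_and] at h
  push Not at h
  obtain ⟨A, B, _, _, _, _, e, hA, hB⟩ := h ‹_›
  exact ⟨.of R A, .of R B, hA, hB, e⟩

variable [IsLocalRing R]

theorem MemCM0.of_comp_eq_id {A X : Type} [AddCommGroup A] [Module R A] [AddCommGroup X]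
    [Module R X] (hX : MemCM0 R (ModuleCat.of R X)) {i : A →ₗ[R] X} {r : X →ₗ[R] A}
    (hri : r ∘ₗ i = LinearMap.id) : MemCM0 R (ModuleCat.of R A) := by
  obtain ⟨hfin, hdepth, hfree⟩ := hX
  have hfin : Module.Finite R X := hfin
  have : Module.Finite R A := .of_surjective r (LinearMap.surjective_of_comp_eq_id i r hri)
  refine ⟨this, isMCMModule_iff.2 fun p _ ↦ ?_, fun p _ hp ↦ ?_⟩
  · exact (isMCMModule_iff.1 hdepth p).trans
      (moduleDepth_le_of_retract _ _ (localizedModule_map_comp_eq_id p.primeCompl hri))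
  · change Module.Free (Localization.AtPrime p) (LocalizedModule p.primeCompl A)
    have : Module.Free (Localization.AtPrime p) (LocalizedModule p.primeCompl X) := hfree p hp
    have := Module.Projective.of_split _ _ (localizedModule_map_comp_eq_id p.primeCompl hri)
    exact Module.free_of_flat_of_isLocalRing

theorem MemCM0.of_equiv_prod {A B X : Type} [AddCommGroup A] [Module R A] [AddCommGroup B]
    [Module R B] [AddCommGroup X] [Module R X] (hX : MemCM0 R (ModuleCat.of R X))
    (e : X ≃ₗ[R] A × B) : MemCM0 R (ModuleCat.of R A) ∧ MemCM0 R (ModuleCat.of R B) :=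
  ⟨hX.of_comp_eq_id (i := e.symm ∘ₗ LinearMap.inl R A B) (r := LinearMap.fst R A B ∘ₗ e)
      (by ext; simp),
    hX.of_comp_eq_id (i := e.symm ∘ₗ LinearMap.inr R A B) (r := LinearMap.snd R A B ∘ₗ e)
      (by ext; simp)⟩

theorem MemCM0.factorsThroughFree_of_forall_indecomposableModule {a : R}
    (h : ∀ M : ModuleCat.{0} R, MemCM0 R M → IndecomposableModule R M → FactorsThroughFree a M)
    {X : ModuleCat.{0} R} (hX : MemCM0 R X) : FactorsThroughFree a X := by
  induction hn : Module.finrank (ResidueField R) (ResidueField R ⊗[R] X)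
    using Nat.strong_induction_on generalizing X with
  | _ n ih =>
  subst hn
  cases subsingleton_or_nontrivial X
  · exact factorsThroughFree_of_subsingleton
  by_cases hindec : IndecomposableModule R X
  · exact h X hX hindec
  obtain ⟨A, B, _, _, ⟨e⟩⟩ := exists_equiv_prod_of_not_indecomposableModule hindec
  obtain ⟨hA, hB⟩ := hX.of_equiv_prod e
  have : Module.Finite R A := hA.1
  have : Module.Finite R B := hB.1
  have rank_eq := finrank_residueField_tensorProduct_eq_add e
  have rank_A_pos := finrank_residueField_tensorProduct_pos (R := R) (A := A)
  have rank_B_pos := finrank_residueField_tensorProduct_pos (R := R) (A := B)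
  exact ((ih _ (by lia) hA rfl).prod (ih _ (by lia) hB rfl)).of_equiv e

variable [IsNoetherianRing R]

theorem MemCM0.exists_factorsThroughFree {M : ModuleCat.{0} R} (hM : MemCM0 R M) {p : Ideal R}
    [p.IsPrime] (hp : p ≠ maximalIdeal R) : ∃ a ∉ p, FactorsThroughFree a M := by
  have : Module.Finite R M := hM.1
  have : Module.FinitePresentation R M := Module.finitePresentation_of_finite R M
  have : Module.Free (Localization.AtPrime p) (LocalizedModule p.primeCompl M) := hM.2.2 p hp
  have : Module.Projective (Localization.AtPrime p) (LocalizedModule p.primeCompl M) :=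
    Module.Projective.of_free
  exact exists_factorsThroughFree_of_projective_localizedModule p.primeCompl

theorem exists_forall_memCM0_factorsThroughFree
    (hfin : ∃ (n : ℕ) (f : Fin n → ModuleCat.{0} R),
      ∀ M : ModuleCat.{0} R, MemCM0 R M → IndecomposableModule R M →
        ∃ i : Fin n, Nonempty ((M : Type) ≃ₗ[R] (f i : Type)))
    {p : Ideal R} [hp : p.IsPrime] (hpm : p ≠ maximalIdeal R) :
    ∃ a ∉ p, ∀ M : ModuleCat.{0} R, MemCM0 R M → FactorsThroughFree a M := by
  obtain ⟨n, f, hf⟩ := hfin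
  have exists_for_class (i : Fin n) : ∃ a ∉ p, ∀ M : ModuleCat.{0} R, MemCM0 R M →
      Nonempty (M ≃ₗ[R] f i) → FactorsThroughFree a M := by
    by_cases h : ∃ M : ModuleCat.{0} R, MemCM0 R M ∧ Nonempty (M ≃ₗ[R] f i)
    · obtain ⟨M, hM, ⟨e⟩⟩ := h
      obtain ⟨a, ha, hfac⟩ := hM.exists_factorsThroughFree hpm
      exact ⟨a, ha, fun M' _ ⟨e'⟩ ↦ hfac.of_equiv (e'.trans e.symm)⟩
    · exact ⟨1, hp.one_notMem, fun M hM e ↦ absurd ⟨M, hM, e⟩ h⟩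
  choose a ha hfac using exists_for_class
  refine ⟨∏ i, a i, fun hmem ↦ ?_, fun M hM ↦
    hM.factorsThroughFree_of_forall_indecomposableModule fun N hN hindec ↦ ?_⟩
  · obtain ⟨i, -, hi⟩ := hp.prod_mem_iff.1 hmem
    exact ha i hi
  · obtain ⟨i, e⟩ := hf N hN hindec
    exact (hfac i N hN e).of_dvd (Finset.dvd_prod_of_mem a (Finset.mem_univ i))

end FiniteType

theorem isRegularLocal_localization_of_forall_memCM0_factorsThroughFree {R : Type} [CommRing R]
    [IsNoetherianRing R] [IsLocalRing R] (hCM : IsCMLocalRing R) {p : Ideal R} [p.IsPrime] {a : R}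
    (ha : a ∉ p) (h : ∀ M : ModuleCat.{0} R, MemCM0 R M → FactorsThroughFree a M) :
    IsRegularLocal (Localization.AtPrime p) := by
  have : IsNoetherianRing (Localization.AtPrime p) :=
    IsLocalization.isNoetherianRing p.primeCompl _ inferInstance
  obtain ⟨d, hd⟩ := exists_ringKrullDim_eq_natCast R
  let N : FGModuleCat.{0} R := .of R (R ⧸ p)
  have torOne_sup_pow (i : ℕ) :
      AnnihilatesTorOne a (R ⧸ (p ⊔ maximalIdeal R ^ i)) ↑(syzygy^[d] N) := by
    let M : FGModuleCat.{0} R := .of R (R ⧸ (p ⊔ maximalIdeal R ^ i))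
    have hM : MemCM0 R (syzygy^[d] M).obj := memCM0_syzygy_iterate hCM hd
      (isLocallyFreeOnPuncturedSpectrum_quotient le_sup_right)
    exact AnnihilatesTorOne.of_syzygy_iterate (M := M) (h _ hM).annihilatesTorOne
  have free_syzygy : Module.Free (Localization.AtPrime p)
      (LocalizedModule p.primeCompl ↑(syzygy^[d] N)) :=
    (annihilatesTorOne_quotient_of_forall_sup_pow torOne_sup_pow).free_localizedModule ha
  have pd_quotient : HasProjectiveDimensionLE
      (ModuleCat.of (Localization.AtPrime p) (LocalizedModule p.primeCompl (R ⧸ p))) (0 + d) :=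
    hasProjectiveDimensionLE_localizedModule_of_syzygy_iterate (M := N) p.primeCompl
      (hasProjectiveDimensionLE_zero_iff.2 inferInstance)
  obtain ⟨e⟩ := nonempty_linearEquiv_residueField_localizedModule_quotient p
  have := isRegularLocalRing_of_hasProjectiveDimensionLE_residueField
    (hasProjectiveDimensionLE_of_comp_eq_id e.symm_comp pd_quotient)
  exact isRegularLocal_of_isRegularLocalRing (Localization.AtPrime p)

/-- Let `R` be a Cohen-Macaulay noetherian local ring. If there are only
finitely many isomorphism classes of indecomposable modules in `CM₀(R)`, then `R` is an
isolated singularity. -/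
theorem stmt19 (R : Type) [CommRing R] [IsNoetherianRing R] [IsLocalRing R]
    (hCM : IsCMLocalRing R)
    (hfin : ∃ (n : ℕ) (f : Fin n → ModuleCat.{0} R),
      ∀ M : ModuleCat.{0} R, MemCM0 R M → IndecomposableModule R M →
        ∃ i : Fin n, Nonempty ((M : Type) ≃ₗ[R] (f i : Type))) :
    ∀ (p : Ideal R) [p.IsPrime], p ≠ maximalIdeal R →
      IsRegularLocal (Localization.AtPrime p) := by
  intro p _ hpm
  obtain ⟨a, ha, factors⟩ := exists_forall_memCM0_factorsThroughFree hfin hpm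
  exact isRegularLocal_localization_of_forall_memCM0_factorsThroughFree hCM ha factors

end
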